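/- arXiv:math/0205040 — 4 statements merged into one kernel-verified Lean document; each statement's English description precedes it below -/
import Mathlib

section
/- B(4,3) is nilpotent of class exactly 3: the fourth term γ₄(B(4,3)) of its lower central series is trivial, while the third term γ₃(B(4,3)) is nontrivial. -/
/-- The free Burnside group `B(4,3)` of exponent 3 on four generators:
the free group on four generators modulo the normal closure of all cubes. -/
abbrev B43 : Type :=
  FreeGroup (Fin 4) ⧸ Subgroup.normalClosure {w : FreeGroup (Fin 4) | ∃ v, w = v ^ 3}

/-!
Both halves rest on endomorphisms of square zero.

A group of exponent `3` is `2`-Engel, so the normal closure `N` of an element is abelian and each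
`δ_g : n ↦ [n, g]` is an endomorphism of `N` of square zero. As `δ_(gh) = δ_g + δ_h - δ_g δ_h`,
these endomorphisms anticommute, and therefore `[x, y, z]` changes sign under transpositions of its
entries. Following Levi, the Hall–Witt identity then gives `[x, y, z] ^ 3 = 1`, while moving `z` and
`w` to the front of `[x, y, z, w]` in two ways gives `[x, y, z, w] ^ 2 = 1`; hence
`[x, y, z, w] = 1`.

Conversely, over a ring with `3 = 0` the equation `(1 - u) ^ 2 = 0` says `1 + u + u ^ 2 = 0`, which
makes every affine map with linear part `u` have order dividing `3`. Units `u` and `v` with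
augmentation `1` in the exterior algebra on two generators satisfy such equations although
`(1 - v) * (1 - u)` can be nonzero; translation by this product is the commutator of the
translation by `1` with `u` and `v`.
-/

open scoped commutatorElement Quaternion

/-- For `u = 1 - a` and `v = 1 - b` the last hypothesis says that `1 - a * b` has square zero. -/
theorem mul_add_mul_swap_eq_zero {R : Type*} [Ring R] {u v : R} (hu : u * u = 0) (hv : v * v = 0)
    (huv : (u + v - u * v) * (u + v - u * v) = 0) : u * v + v * u = 0 := by
  set w := u + v - u * v with hw
  have huw : u * w = u * v := by
    rw [hw, mul_sub, mul_add, hu, ← mul_assoc, hu, zero_mul, zero_add, sub_zero]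
  have huvw : u * v * w = 0 := by rw [← huw, mul_assoc, huv, mul_zero]
  have hvw : u * v + v * w = 0 := by
    calc u * v + v * w = u * w + v * w - u * v * w := by rw [huw, huvw, sub_zero]
      _ = w * w := by rw [hw]; noncomm_ring
      _ = 0 := huv
  have hvuv : v * u * v = 0 := by
    calc v * u * v = v * (u * v + v * w) - v * v * w := by noncomm_ring
      _ = 0 := by rw [hvw, hv, mul_zero, zero_mul, sub_zero]
  calc u * v + v * u = u * v + v * w - v * v + v * u * v := by rw [hw]; noncomm_ring
    _ = 0 := by rw [hvw, hv, hvuv, sub_zero, add_zero]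

section ConjRep

variable {G : Type*} [Group G] (N : Subgroup G) [N.Normal] [IsMulCommutative N]

open scoped IsMulCommutative

/-- The conjugation action of a group on an abelian normal subgroup, as an integral
representation. -/
def conjRep : Representation ℤ G (Additive N) :=
  (Representation.ofMulDistribMulAction (ConjAct G) N).comp ConjAct.toConjAct.toMonoidHom

/-- The endomorphism `n ↦ [n, g] = n (g n g⁻¹)⁻¹` of an abelian normal subgroup `N`, written
additively. -/
def commutatorEnd (g : G) : Module.End ℤ (Additive N) :=
  1 - conjRep N g

theorem commutatorEnd_mul (g h : G) :
    commutatorEnd N (g * h) =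
      commutatorEnd N g + commutatorEnd N h - commutatorEnd N g * commutatorEnd N h := by
  simp only [commutatorEnd, map_mul]
  noncomm_ring

variable {N}

theorem coe_toMul_commutatorEnd_apply (g : G) (n : Additive N) :
    ((commutatorEnd N g n).toMul : G) = ⁅(n.toMul : G), g⁆ := by
  have hconj : ((conjRep N g n).toMul : G) = g * n.toMul * g⁻¹ := rfl
  calc ((commutatorEnd N g n).toMul : G) = n.toMul / (conjRep N g n).toMul := rfl
    _ = ⁅(n.toMul : G), g⁆ := by
      rw [hconj, commutatorElement_def, div_eq_mul_inv]; group

theorem commutatorEnd_mul_self (hN : ∀ n ∈ N, ∀ g : G, ⁅⁅n, g⁆, g⁆ = 1) (g : G) :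
    commutatorEnd N g * commutatorEnd N g = 0 := by
  ext n
  simp [coe_toMul_commutatorEnd_apply, hN]

theorem commutator_commutator_mul_swap_of_mem (hN : ∀ n ∈ N, ∀ g : G, ⁅⁅n, g⁆, g⁆ = 1)
    {n : G} (hn : n ∈ N) (g h : G) : ⁅⁅n, h⁆, g⁆ * ⁅⁅n, g⁆, h⁆ = 1 := by
  have hsq := commutatorEnd_mul_self hN
  have anticomm := mul_add_mul_swap_eq_zero (hsq g) (hsq h) (commutatorEnd_mul N g h ▸ hsq (g * h))
  have h₀ := congrArg (fun f => ((f (Additive.ofMul ⟨n, hn⟩)).toMul : G)) anticomm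
  simpa [coe_toMul_commutatorEnd_apply] using h₀

end ConjRep

/-- A group is `2`-Engel if `[x, y, y] = 1` for all elements `x` and `y`. -/
def IsTwoEngel (G : Type*) [Group G] : Prop :=
  ∀ x y : G, ⁅⁅x, y⁆, y⁆ = 1

theorem isTwoEngel_iff_commute_conj {G : Type*} [Group G] :
    IsTwoEngel G ↔ ∀ x y : G, Commute (x * y * x⁻¹) y := by
  refine forall₂_congr fun x y => ?_
  have hcomm : ⁅x, y⁆ = x * y * x⁻¹ * y⁻¹ := commutatorElement_def x y
  rw [commutatorElement_eq_one_iff_commute]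
  constructor <;> intro h
  · rw [← inv_mul_cancel_right (x * y * x⁻¹) y, ← hcomm]
    exact h.mul_left (Commute.refl y)
  · exact h.mul_left (Commute.refl y).inv_left

theorem isTwoEngel_of_pow_three_eq_one {G : Type*} [Group G] (h : ∀ g : G, g ^ 3 = 1) :
    IsTwoEngel G := by
  have mul_mul_self (x y : G) : y * x * y = x⁻¹ * y⁻¹ * x⁻¹ := by
    rw [← mul_inv_rev, ← mul_inv_rev, eq_inv_iff_mul_eq_one]
    simpa [pow_succ, mul_assoc] using h (y * x)
  have mul_self_eq_inv (x : G) : x * x = x⁻¹ := by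
    rw [eq_inv_iff_mul_eq_one, ← h x, pow_three']
  refine isTwoEngel_iff_commute_conj.mpr fun x y => ?_
  calc x * y * x⁻¹ * y = x * (y * x⁻¹ * y) := by group
    _ = x * x * y⁻¹ * x := by rw [mul_mul_self]; group
    _ = x⁻¹ * y⁻¹ * (x * x)⁻¹ := by rw [mul_self_eq_inv, inv_inv]
    _ = y * x * y * x⁻¹ := by rw [mul_mul_self]; group
    _ = y * (x * y * x⁻¹) := by group

namespace IsTwoEngel

variable {G : Type*} [Group G]

theorem isMulCommutative_normalClosure_singleton (hG : IsTwoEngel G) (x : G) :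
    IsMulCommutative (Subgroup.normalClosure {x}) := by
  refine Subgroup.isMulCommutative_closure fun a ha b hb => ?_
  simp only [Group.conjugatesOfSet, Set.mem_singleton_iff, Set.iUnion_iUnion_eq_left,
    conjugatesOf, Set.mem_ofPred_eq, isConj_iff] at ha hb
  obtain ⟨c, rfl⟩ := ha
  obtain ⟨d, rfl⟩ := hb
  have h := isTwoEngel_iff_commute_conj.mp hG (c * d⁻¹) (d * x * d⁻¹)
  rwa [show c * d⁻¹ * (d * x * d⁻¹) * (c * d⁻¹)⁻¹ = c * x * c⁻¹ by group] at h

theorem commutator_inv_left (hG : IsTwoEngel G) (x y : G) : ⁅x⁻¹, y⁆ = ⁅x, y⁆⁻¹ := by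
  have h : Commute ⁅y, x⁆ x := commutatorElement_eq_one_iff_commute.mp (hG y x)
  rw [commutatorElement_inv_left, commutatorElement_inv, mul_assoc, h.eq, inv_mul_cancel_left]

theorem commutator_swap_left (hG : IsTwoEngel G) (x y z : G) : ⁅⁅x, y⁆, z⁆ = ⁅⁅y, x⁆, z⁆⁻¹ := by
  rw [← commutatorElement_inv y x, hG.commutator_inv_left]

theorem commutator_swap_right (hG : IsTwoEngel G) (x y z : G) :
    ⁅⁅x, y⁆, z⁆ = ⁅⁅x, z⁆, y⁆⁻¹ := by
  have := hG.isMulCommutative_normalClosure_singleton x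
  exact eq_inv_of_mul_eq_one_left <| commutator_commutator_mul_swap_of_mem
    (fun n _ g => hG n g) (Subgroup.subset_normalClosure (Set.mem_singleton x)) z y

theorem commutator_rotate (hG : IsTwoEngel G) (x y z : G) : ⁅⁅x, y⁆, z⁆ = ⁅⁅z, x⁆, y⁆ := by
  rw [hG.commutator_swap_right x y z, hG.commutator_swap_left x z y, inv_inv]

theorem commutator_commutator_right (hG : IsTwoEngel G) (x y z : G) :
    ⁅x, ⁅y, z⁆⁆ = ⁅⁅x, y⁆, z⁆⁻¹ := by
  rw [← commutatorElement_inv, hG.commutator_rotate x y z, hG.commutator_rotate z x y]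

theorem commute_commutator_commutator (hG : IsTwoEngel G) (x y z : G) :
    Commute ⁅⁅x, y⁆, z⁆ y := by
  rw [hG.commutator_swap_right]
  exact (commutatorElement_eq_one_iff_commute.mp (hG _ y)).inv_left

theorem commutator_conj_right (hG : IsTwoEngel G) (x y z : G) :
    ⁅⁅x, y⁆, y * z * y⁻¹⁆ = ⁅⁅x, y⁆, z⁆ := by
  have hxy : Commute y ⁅x, y⁆ := (commutatorElement_eq_one_iff_commute.mp (hG x y)).symm
  have h := conjugate_commutatorElement ⁅x, y⁆ z y
  rwa [(hG.commute_commutator_commutator x y z).symm.mul_inv_cancel,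
    hxy.mul_inv_cancel, eq_comm] at h

theorem commutator_commutator_pow_three (hG : IsTwoEngel G) (x y z : G) :
    ⁅⁅x, y⁆, z⁆ ^ 3 = 1 := by
  have h := commutatorElement_commutatorElement_conj_mul x y z
  rwa [hG.commutator_conj_right, hG.commutator_conj_right, hG.commutator_conj_right,
    hG.commutator_rotate y z x, hG.commutator_rotate z x y, hG.commutator_rotate y z x,
    ← pow_three'] at h

theorem commutator_commutator_commutator_sq (hG : IsTwoEngel G) (x y z w : G) :
    ⁅⁅⁅x, y⁆, z⁆, w⁆ ^ 2 = 1 := by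
  have outer : ⁅⁅⁅x, y⁆, z⁆, w⁆ = ⁅⁅⁅z, w⁆, x⁆, y⁆⁻¹ := by
    rw [← hG.commutator_commutator_right ⁅z, w⁆, ← commutatorElement_inv ⁅x, y⁆,
      hG.commutator_commutator_right ⁅x, y⁆, inv_inv]
  have inner : ⁅⁅⁅x, y⁆, z⁆, w⁆ = ⁅⁅⁅z, w⁆, x⁆, y⁆ := by
    rw [hG.commutator_rotate x y z, hG.commutator_swap_right ⁅z, x⁆ y w,
      hG.commutator_swap_right z x w, hG.commutator_inv_left, inv_inv]
  rw [sq, mul_eq_one_iff_eq_inv]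
  exact outer.trans (congrArg _ inner.symm)

theorem commutator_commutator_commutator_eq_one (hG : IsTwoEngel G) (x y z w : G) :
    ⁅⁅⁅x, y⁆, z⁆, w⁆ = 1 := by
  have h := hG.commutator_commutator_pow_three ⁅x, y⁆ z w
  rwa [pow_succ, hG.commutator_commutator_commutator_sq, one_mul] at h

theorem lowerCentralSeries_three_eq_bot (hG : IsTwoEngel G) :
    Subgroup.lowerCentralSeries (⊤ : Subgroup G) 3 = ⊥ := by
  rw [Subgroup.lowerCentralSeries_eq_bot_iff_upperCentralSeries_eq_top, Subgroup.eq_top_iff']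
  simp only [Subgroup.mem_upperCentralSeries_succ_iff, Subgroup.upperCentralSeries_zero,
    Subgroup.mem_bot]
  exact hG.commutator_commutator_commutator_eq_one

end IsTwoEngel

theorem one_add_add_sq_eq_zero_of_three_eq_zero {R : Type*} [Ring R] (h3 : (3 : R) = 0) {r : R}
    (hr : (1 - r) * (1 - r) = 0) : 1 + r + r ^ 2 = 0 := by
  calc 1 + r + r ^ 2 = (1 - r) * (1 - r) + 3 * r := by noncomm_ring
    _ = 0 := by rw [hr, h3, zero_mul, add_zero]

/-- The group of affine maps `a ↦ u * a + b` of a ring `R` whose linear part `u` lies in the group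
`U` of units, as a semidirect product: `inl` gives the translations and `inr` the linear maps. -/
abbrev UnitAffineGroup {R : Type*} [Ring R] (U : Subgroup Rˣ) : Type _ :=
  Multiplicative R ⋊[(MulAutMultiplicative R).symm.toMonoidHom.comp
    (DistribMulAction.toAddAut U R)] U

namespace UnitAffineGroup

open SemidirectProduct

variable {R : Type*} [Ring R] {U : Subgroup Rˣ}

theorem commutator_inl_inr (a : R) (u : U) :
    ⁅(inl (.ofAdd a) : UnitAffineGroup U), (inr u : UnitAffineGroup U)⁆ =
      inl (.ofAdd ((1 - ((u : Rˣ) : R)) * a)) := by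
  rw [commutatorElement_def, mul_assoc, mul_assoc, ← mul_assoc (inr u), ← map_inv inl,
    ← map_inv inr, ← inl_aut, ← map_mul, sub_mul, one_mul, sub_eq_add_neg, ← mul_neg]
  rfl

theorem pow_three_eq_one (h3 : (3 : R) = 0)
    (hU : ∀ u ∈ U, (1 - (u : R)) * (1 - (u : R)) = 0) (x : UnitAffineGroup U) :
    x ^ 3 = 1 := by
  have hsum (u : U) : 1 + ((u : Rˣ) : R) + ((u : Rˣ) : R) ^ 2 = 0 :=
    one_add_add_sq_eq_zero_of_three_eq_zero h3 (hU u u.2)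
  ext
  · have htranslation (u : U) (a : R) :
        a + ((u : Rˣ) : R) * a + ((u : Rˣ) : R) ^ 2 * a = 0 := by
      rw [← one_add_mul, ← add_mul, hsum, zero_mul]
    simpa [pow_three', sq, Subgroup.smul_def, Units.smul_def] using
      htranslation x.right x.left.toAdd
  · have hlinear (u : U) : ((u : Rˣ) : R) ^ 3 = 1 := by
      rw [← sub_eq_zero]
      calc ((u : Rˣ) : R) ^ 3 - 1
        _ = (((u : Rˣ) : R) - 1) * (1 + ((u : Rˣ) : R) + ((u : Rˣ) : R) ^ 2) := by noncomm_ring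
        _ = 0 := by rw [hsum, mul_zero]
    simpa [pow_three'] using hlinear x.right

theorem exists_commutator_commutator_ne_one (u v : U)
    (h : (1 - ((v : Rˣ) : R)) * (1 - ((u : Rˣ) : R)) ≠ 0) :
    ∃ x y z : UnitAffineGroup U, ⁅⁅x, y⁆, z⁆ ≠ 1 := by
  refine ⟨inl (.ofAdd 1), inr u, inr v, ?_⟩
  rw [commutator_inl_inr, commutator_inl_inr, mul_one]
  exact fun hone =>
    h (Multiplicative.ofAdd.injective (inl_injective (hone.trans (map_one inl).symm)))

end UnitAffineGroup

section DegenerateQuaternion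

variable (k : Type*) [CommRing k]

/-- The real part as a multiplicative map on the degenerate quaternion algebra `ℍ[k,0,0]`, where
`i * i = 0`, `j * j = 0` and `i * j = -(j * i)`. This algebra is the exterior algebra of `k²`, and
the map is its augmentation. -/
def augmentation : ℍ[k,0,0] →* k where
  toFun := QuaternionAlgebra.re
  map_one' := rfl
  map_mul' a b := by simp

/-- The units of `ℍ[k,0,0]` with real part `1`, that is, those of augmentation `1` in the exterior
algebra of `k²`. They are the linear parts of the affine group of exponent `3` and class `3`. -/
def unipotentUnits : Subgroup (ℍ[k,0,0])ˣ :=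
  (Units.map (augmentation k)).ker

variable {k}

theorem mul_self_eq_zero_of_re_eq_zero {n : ℍ[k,0,0]} (hn : n.re = 0) : n * n = 0 := by
  ext <;> simp [hn, mul_comm]

theorem mem_unipotentUnits {u : (ℍ[k,0,0])ˣ} : u ∈ unipotentUnits k ↔ (u : ℍ[k,0,0]).re = 1 :=
  Units.ext_iff

theorem exists_mem_unipotentUnits {n : ℍ[k,0,0]} (hn : n.re = 0) :
    ∃ u : unipotentUnits k, 1 - ((u : (ℍ[k,0,0])ˣ) : ℍ[k,0,0]) = n := by
  have hsq := mul_self_eq_zero_of_re_eq_zero hn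
  refine ⟨⟨⟨1 - n, 1 + n, ?_, ?_⟩, mem_unipotentUnits.mpr ?_⟩, sub_sub_cancel 1 n⟩
  · calc (1 - n) * (1 + n) = 1 - n * n := by noncomm_ring
      _ = 1 := by rw [hsq, sub_zero]
  · calc (1 + n) * (1 - n) = 1 - n * n := by noncomm_ring
      _ = 1 := by rw [hsq, sub_zero]
  · simp [hn]

theorem unitAffineGroup_pow_three_eq_one (h3 : (3 : k) = 0)
    (x : UnitAffineGroup (unipotentUnits k)) : x ^ 3 = 1 := by
  have h3' : (3 : ℍ[k,0,0]) = 0 := by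
    rw [← QuaternionAlgebra.coe_ofNat, h3, QuaternionAlgebra.coe_zero]
  refine UnitAffineGroup.pow_three_eq_one h3' (fun u hu => ?_) x
  exact mul_self_eq_zero_of_re_eq_zero (by simp [mem_unipotentUnits.mp hu])

theorem exists_unitAffineGroup_commutator_commutator_ne_one [Nontrivial k] :
    ∃ x y z : UnitAffineGroup (unipotentUnits k), ⁅⁅x, y⁆, z⁆ ≠ 1 := by
  obtain ⟨u, hu⟩ := exists_mem_unipotentUnits (n := (⟨0, 1, 0, 0⟩ : ℍ[k,0,0])) rfl
  obtain ⟨v, hv⟩ := exists_mem_unipotentUnits (n := (⟨0, 0, 1, 0⟩ : ℍ[k,0,0])) rfl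
  refine UnitAffineGroup.exists_commutator_commutator_ne_one u v ?_
  rw [hu, hv]
  intro h
  simpa using congrArg QuaternionAlgebra.imK h

end DegenerateQuaternion

/-- The free Burnside group of exponent `n` on the generators `α`. It is presented so that `B43` is
`FreeBurnsideGroup (Fin 4) 3` by unfolding. -/
abbrev FreeBurnsideGroup (α : Type*) (n : ℕ) : Type _ :=
  FreeGroup α ⧸ Subgroup.normalClosure {w : FreeGroup α | ∃ v, w = v ^ n}

namespace FreeBurnsideGroup

variable {α : Type*} {n : ℕ}

theorem pow_eq_one (g : FreeBurnsideGroup α n) : g ^ n = 1 := by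
  obtain ⟨w, rfl⟩ := QuotientGroup.mk_surjective g
  rw [← QuotientGroup.mk_pow, QuotientGroup.eq_one_iff]
  exact Subgroup.subset_normalClosure ⟨w, rfl⟩

/-- The image of a generator in the free Burnside group. -/
def of (a : α) : FreeBurnsideGroup α n :=
  QuotientGroup.mk (FreeGroup.of a)

theorem exists_hom_apply_of {H : Type*} [Group H] (hH : ∀ h : H, h ^ n = 1) (f : α → H) :
    ∃ φ : FreeBurnsideGroup α n →* H, ∀ a, φ (of a) = f a := by
  have hker : Subgroup.normalClosure {w : FreeGroup α | ∃ v, w = v ^ n} ≤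
      (FreeGroup.lift f).ker := by
    refine Subgroup.normalClosure_le_normal ?_
    rintro _ ⟨v, rfl⟩
    rw [SetLike.mem_coe, MonoidHom.mem_ker, map_pow, hH]
  exact ⟨QuotientGroup.lift _ _ hker, fun a => FreeGroup.lift_apply_of⟩

theorem lowerCentralSeries_two_ne_bot {H : Type*} [Group H] (hH : ∀ h : H, h ^ n = 1)
    {x y z : H} (hxyz : ⁅⁅x, y⁆, z⁆ ≠ 1) (e : Fin 3 ↪ α) :
    Subgroup.lowerCentralSeries (⊤ : Subgroup (FreeBurnsideGroup α n)) 2 ≠ ⊥ := by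
  obtain ⟨φ, hφ⟩ := exists_hom_apply_of hH (Function.extend e ![x, y, z] 1)
  have hgen (i : Fin 3) : φ (of (e i)) = ![x, y, z] i := by
    rw [hφ, e.injective.extend_apply]
  have hmem : ⁅⁅of (e 0), of (e 1)⁆, of (e 2)⁆ ∈
      Subgroup.lowerCentralSeries (⊤ : Subgroup (FreeBurnsideGroup α n)) 2 :=
    Subgroup.commutator_mem_commutator
      (Subgroup.commutator_mem_commutator (Subgroup.mem_top _) (Subgroup.mem_top _))
      (Subgroup.mem_top _)
  intro hbot
  rw [hbot, Subgroup.mem_bot] at hmem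
  apply hxyz
  simpa [hgen] using congrArg φ hmem

end FreeBurnsideGroup

theorem B43_nilpotent_class_three_general {α : Type*} (e : Fin 3 ↪ α) :
    Subgroup.lowerCentralSeries (⊤ : Subgroup (FreeBurnsideGroup α 3)) 3 = ⊥ ∧
      Subgroup.lowerCentralSeries (⊤ : Subgroup (FreeBurnsideGroup α 3)) 2 ≠ ⊥ := by
  have engel : IsTwoEngel (FreeBurnsideGroup α 3) :=
    isTwoEngel_of_pow_three_eq_one FreeBurnsideGroup.pow_eq_one
  obtain ⟨x, y, z, hxyz⟩ := exists_unitAffineGroup_commutator_commutator_ne_one (k := ZMod 3)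
  exact ⟨engel.lowerCentralSeries_three_eq_bot,
    FreeBurnsideGroup.lowerCentralSeries_two_ne_bot (unitAffineGroup_pow_three_eq_one rfl) hxyz e⟩

/-- `B(4,3)` is nilpotent of class exactly 3: the fourth term `γ₄` of its lower
central series is trivial (Mathlib: `lowerCentralSeries B43 3 = ⊥`, since `γ₁` has
index `0`), while the third term `γ₃` is nontrivial. -/
theorem B43_nilpotent_class_three :
    Subgroup.lowerCentralSeries (⊤ : Subgroup B43) 3 = ⊥ ∧ Subgroup.lowerCentralSeries (⊤ : Subgroup B43) 2 ≠ ⊥ :=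
  B43_nilpotent_class_three_general (Fin.castLEEmb (by decide))
end

section
/- B(4,3) is a finite group of cardinality exactly 3¹⁴. -/
/-!
In a group of exponent 3 every element commutes with its conjugates, so `⁅x, y⁆` commutes with `x`
and `y` and the triple commutator `⁅x, ⁅y, z⁆⁆` is alternating. Moving the letters of a weight-four
commutator around in two ways shows that it is its own inverse, hence trivial. The group is thus
nilpotent of class at most 3, and each generator, each `⁅xᵢ, xⱼ⁆` with `i < j` and each
`⁅xᵢ, ⁅xⱼ, xₖ⁆⁆` with `i < j < k` contributes at most a factor 3 to its order. Conversely, the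
polynomial multiplication law of the collected normal form `∏ xᵢ^aᵢ ∏ ⁅xᵢ, xⱼ⁆^bᵢⱼ
∏ ⁅⁅xᵢ, xⱼ⁆, xₖ⁆^cᵢⱼₖ` makes the set of all exponent vectors a group of exponent 3 generated by the
`xᵢ`, so the bound `3 ^ (r + r.choose 2 + r.choose 3)` on `r` generators is attained.
-/

open scoped commutatorElement

theorem commutatorElement_mem {G : Type*} [Group G] {H : Subgroup G} {a b : G} (ha : a ∈ H)
    (hb : b ∈ H) : ⁅a, b⁆ ∈ H :=
  H.commutator_le_self (Subgroup.commutator_mem_commutator ha hb)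

theorem card_fin_orderEmbedding {α : Type*} [LinearOrder α] [Finite α] (k : ℕ) :
    Nat.card (Fin k ↪o α) = (Nat.card α).choose k := by
  rw [Nat.card_congr Set.powersetCard.ofFinEmbEquiv, Set.powersetCard.card]

theorem mem_of_forall_single_mem {κ G : Type*} [Finite κ] [DecidableEq κ] [Group G] {n : ℕ}
    {H : Subgroup G} {f : (κ → ZMod n) → G} (hf : ∀ s t, f (s + t) = f s * f t)
    (h : ∀ k, f (Pi.single k 1) ∈ H) (s : κ → ZMod n) : f s ∈ H := by
  let φ : (κ → ZMod n) →+ Additive G := AddMonoidHom.mk' (fun s ↦ Additive.ofMul (f s)) hf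
  let K := AddSubgroup.toZModSubmodule n (H.toAddSubgroup.comap φ)
  have hK : Submodule.span (ZMod n) (Set.range (Pi.basisFun (ZMod n) κ)) ≤ K :=
    Submodule.span_le.2 (Set.range_subset_iff.2 fun k ↦ by rw [Pi.basisFun_apply]; exact h k)
  exact hK (by rw [(Pi.basisFun (ZMod n) κ).span_eq]; trivial)

section PowThree

variable {G : Type*} [Group G]

theorem inv_eq_mul_self_of_pow_three (h : ∀ g : G, g ^ 3 = 1) (g : G) : g⁻¹ = g * g := by
  rw [inv_eq_iff_mul_eq_one, ← mul_assoc, ← pow_three', h]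

theorem mul_conj_mul_conj_inv_of_pow_three (h : ∀ g : G, g ^ 3 = 1) (x y : G) :
    x * (y * x * y⁻¹) * (y⁻¹ * x * y) = 1 :=
  calc x * (y * x * y⁻¹) * (y⁻¹ * x * y)
    _ = x * y * x * (y⁻¹ * y⁻¹) * x * y := by group
    _ = (x * y) ^ 3 := by
      rw [← inv_eq_mul_self_of_pow_three h y⁻¹, inv_inv, pow_three']
      group
    _ = 1 := h _

theorem commute_conj_of_pow_three (h : ∀ g : G, g ^ 3 = 1) (x y : G) :
    Commute x (y * x * y⁻¹) := by
  have hab := mul_conj_mul_conj_inv_of_pow_three h x y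
  have hba := mul_conj_mul_conj_inv_of_pow_three h x y⁻¹
  rw [inv_inv] at hba
  generalize y * x * y⁻¹ = a at *
  generalize y⁻¹ * x * y = b at *
  have hx : x⁻¹ = a * b := inv_eq_of_mul_eq_one_right (by rw [← mul_assoc, hab])
  have hcomm : Commute b a := by
    change b * a = a * b
    rw [← hx]
    exact (inv_eq_of_mul_eq_one_right (by rw [← mul_assoc, hba])).symm
  have : Commute x⁻¹ a := hx ▸ (Commute.refl a).mul_left hcomm
  simpa only [inv_inv] using this.inv_left

theorem commute_commutatorElement_left_of_pow_three (h : ∀ g : G, g ^ 3 = 1) (x y : G) :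
    Commute x ⁅x, y⁆ := by
  have : ⁅x, y⁆ = x * (y * x * y⁻¹)⁻¹ := by rw [commutatorElement_def]; group
  rw [this]
  exact (Commute.refl x).mul_right (commute_conj_of_pow_three h x y).inv_right

theorem commute_commutatorElement_right_of_pow_three (h : ∀ g : G, g ^ 3 = 1) (x y : G) :
    Commute y ⁅x, y⁆ := by
  rw [← commutatorElement_inv]
  exact (commute_commutatorElement_left_of_pow_three h y x).inv_right

theorem commutatorElement_inv_left_of_pow_three (h : ∀ g : G, g ^ 3 = 1) (x y : G) :
    ⁅x⁻¹, y⁆ = ⁅x, y⁆⁻¹ := by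
  rw [commutatorElement_inv_left, commutatorElement_inv, mul_assoc,
    ← (commute_commutatorElement_right_of_pow_three h y x).eq, inv_mul_cancel_left]

theorem commutatorElement_inv_right_of_pow_three (h : ∀ g : G, g ^ 3 = 1) (x y : G) :
    ⁅x, y⁻¹⁆ = ⁅x, y⁆⁻¹ := by
  rw [← commutatorElement_inv, commutatorElement_inv_left_of_pow_three h, commutatorElement_inv]

theorem commutatorElement_swap_right_of_pow_three (h : ∀ g : G, g ^ 3 = 1) (x y z : G) :
    ⁅x, ⁅y, z⁆⁆ = ⁅x, ⁅z, y⁆⁆⁻¹ := by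
  rw [← commutatorElement_inv_right_of_pow_three h, commutatorElement_inv]

theorem commutatorElement_swap_left_of_pow_three (h : ∀ g : G, g ^ 3 = 1) (x y z : G) :
    ⁅x, ⁅y, z⁆⁆ = ⁅y, ⁅x, z⁆⁆⁻¹ := by
  have hxy : Commute (x * y) ⁅x * y, z⁆ := commute_commutatorElement_left_of_pow_three h _ _
  have hx : Commute x ⁅x, z⁆ := commute_commutatorElement_left_of_pow_three h _ _
  have hy : Commute y ⁅y, z⁆ := commute_commutatorElement_left_of_pow_three h _ _
  rw [commutatorElement_mul_left_eq_conj_mul] at hxy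
  generalize ⁅x, z⁆ = p at *
  generalize ⁅y, z⁆ = q at *
  have hconj : x * q * x⁻¹ * p = q * (y⁻¹ * p * y) :=
    calc x * q * x⁻¹ * p
      _ = (x * y)⁻¹ * (x * q * x⁻¹ * p * (x * y)) := by rw [← hxy.eq, inv_mul_cancel_left]
      _ = y⁻¹ * (q * x⁻¹ * (p * x) * y) := by group
      _ = y⁻¹ * q * p * y := by rw [← hx.eq]; group
      _ = q * (y⁻¹ * p * y) := by rw [hy.inv_left.eq]; group
  calc ⁅x, q⁆
    _ = ⁅q⁻¹, x⁆ := by rw [commutatorElement_inv_left_of_pow_three h, commutatorElement_inv]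
    _ = q⁻¹ * (x * q * x⁻¹ * p) * p⁻¹ := by rw [commutatorElement_def]; group
    _ = ⁅y⁻¹, p⁆ := by rw [hconj, commutatorElement_def]; group
    _ = ⁅y, p⁆⁻¹ := commutatorElement_inv_left_of_pow_three h _ _

theorem commutatorElement_rotate_of_pow_three (h : ∀ g : G, g ^ 3 = 1) (x y z : G) :
    ⁅x, ⁅y, z⁆⁆ = ⁅z, ⁅x, y⁆⁆ := by
  rw [commutatorElement_swap_right_of_pow_three h, commutatorElement_swap_left_of_pow_three h,
    inv_inv]

theorem commutatorElement_weight_four_eq_one_of_pow_three (h : ∀ g : G, g ^ 3 = 1)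
    (w x y z : G) : ⁅w, ⁅x, ⁅y, z⁆⁆⁆ = 1 := by
  have hrot := commutatorElement_rotate_of_pow_three h
  have hswap := commutatorElement_swap_left_of_pow_three h
  have hinv := commutatorElement_inv_right_of_pow_three h
  have hself : ⁅w, ⁅x, ⁅y, z⁆⁆⁆ = ⁅w, ⁅x, ⁅y, z⁆⁆⁆⁻¹ :=
    calc ⁅w, ⁅x, ⁅y, z⁆⁆⁆
      _ = ⁅w, ⁅y, ⁅z, x⁆⁆⁆ := by rw [← hrot y z x]
      _ = ⁅y, ⁅w, ⁅z, x⁆⁆⁆⁻¹ := hswap _ _ _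
      _ = ⁅y, ⁅z, ⁅w, x⁆⁆⁆ := by rw [hswap w, hinv, inv_inv]
      _ = ⁅⁅w, x⁆, ⁅y, z⁆⁆ := hrot _ _ _
      _ = ⁅⁅y, z⁆, ⁅w, x⁆⁆⁻¹ := (commutatorElement_inv _ _).symm
      _ = ⁅w, ⁅x, ⁅y, z⁆⁆⁆⁻¹ := by rw [← hrot]
  rw [← h ⁅w, ⁅x, ⁅y, z⁆⁆⁆, pow_three, mul_eq_one_iff_eq_inv.2 hself, mul_one]

end PowThree

section Layer

open Subgroup
open scoped IsMulCommutative

variable {G κ : Type*} [Group G]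

theorem mk_mem_center_of_closure_eq_top {N : Subgroup G} [N.Normal] {s : Set G}
    (hs : closure s = ⊤) {a : G} (ha : ∀ g ∈ s, ⁅g, a⁆ ∈ N) : (a : G ⧸ N) ∈ center (G ⧸ N) := by
  have hle : closure s ≤ (centralizer {(a : G ⧸ N)}).comap (QuotientGroup.mk' N) := by
    refine (closure_le _).2 fun g hg ↦ mem_centralizer_singleton_iff.2 ?_
    exact commutatorElement_eq_one_iff_mul_comm.1 ((QuotientGroup.eq_one_iff _).2 (ha g hg))
  refine mem_center_iff.2 fun q ↦ ?_
  obtain ⟨g, rfl⟩ := QuotientGroup.mk_surjective q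
  exact mem_centralizer_singleton_iff.1 (hle (hs ▸ mem_top g))

theorem map_mk'_sup_closure_range (N : Subgroup G) [N.Normal] (f : κ → G) :
    (N ⊔ closure (Set.range f)).map (QuotientGroup.mk' N) =
      closure (Set.range fun k ↦ (f k : G ⧸ N)) := by
  rw [Subgroup.map_sup, QuotientGroup.map_mk'_self, bot_sup_eq, MonoidHom.map_closure,
    ← Set.range_comp]
  rfl

theorem normal_sup_closure_range {N : Subgroup G} [N.Normal] {f : κ → G}
    (hf : ∀ k, (f k : G ⧸ N) ∈ center (G ⧸ N)) : (N ⊔ closure (Set.range f)).Normal := by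
  have hle : closure (Set.range fun k ↦ (f k : G ⧸ N)) ≤ center (G ⧸ N) :=
    (closure_le _).2 (Set.range_subset_iff.2 hf)
  have : (closure (Set.range fun k ↦ (f k : G ⧸ N))).Normal :=
    ⟨fun a ha q ↦ by rwa [mem_center_iff.1 (hle ha) q, mul_inv_cancel_right]⟩
  rw [← sup_of_le_right (le_sup_left : N ≤ N ⊔ closure (Set.range f)),
    ← QuotientGroup.comap_map_mk', map_mk'_sup_closure_range]
  exact this.comap _

theorem card_closure_range_dvd_of_commute [Finite κ] {n : ℕ} (hn : ∀ g : G, g ^ n = 1) {f : κ → G}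
    (hf : ∀ i j, Commute (f i) (f j)) : Nat.card (closure (Set.range f)) ∣ n ^ Nat.card κ := by
  have : IsMulCommutative (closure (Set.range f)) := isMulCommutative_closure (by
    rintro _ ⟨i, rfl⟩ _ ⟨j, rfl⟩
    exact hf i j)
  have hrank : Group.rank (closure (Set.range f)) ≤ Nat.card κ :=
    (rank_closure_finite_le_nat_card _).trans (Finite.card_range_le f)
  exact (card_dvd_exponent_pow_rank' _ fun g ↦ Subtype.ext (by simpa using hn g)).trans
    (pow_dvd_pow _ hrank)

theorem card_sup_closure_range_dvd [Finite κ] {n : ℕ} (hn : ∀ g : G, g ^ n = 1)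
    {N : Subgroup G} [N.Normal] {f : κ → G} (hf : ∀ k, (f k : G ⧸ N) ∈ center (G ⧸ N)) :
    Nat.card ↥(N ⊔ closure (Set.range f)) ∣ Nat.card N * n ^ Nat.card κ := by
  have hquot (q : G ⧸ N) : q ^ n = 1 := by
    obtain ⟨g, rfl⟩ := QuotientGroup.mk_surjective q
    rw [← QuotientGroup.mk_pow, hn, QuotientGroup.mk_one]
  have hcomm (i j : κ) : Commute (f i : G ⧸ N) (f j) := (mem_center_iff.1 (hf j) _)
  rw [← relIndex_bot_left, ← relIndex_mul_relIndex ⊥ N _ bot_le le_sup_left, relIndex_bot_left]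
  refine mul_dvd_mul_left _ ?_
  nth_rw 1 [← QuotientGroup.ker_mk' N]
  rw [relIndex_ker, map_mk'_sup_closure_range]
  exact card_closure_range_dvd_of_commute hquot hcomm

end Layer

section UpperBound

open Subgroup

variable {G α : Type*} [Group G] [LinearOrder α]

theorem commutatorElement_mem_of_orderEmbedding {x : α → G} {K : Subgroup G}
    (hK : ∀ σ : Fin 2 ↪o α, ⁅x (σ 0), x (σ 1)⁆ ∈ K) (i j : α) : ⁅x i, x j⁆ ∈ K := by
  have hlt (i j : α) (hij : i < j) : ⁅x i, x j⁆ ∈ K :=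
    hK (OrderEmbedding.ofStrictMono ![i, j] (by simpa [Fin.strictMono_iff_lt_succ]))
  rcases lt_trichotomy i j with hij | rfl | hji
  · exact hlt i j hij
  · simp
  · simpa using inv_mem (hlt j i hji)

theorem forall_three_of_swap_of_lt {P : α → α → α → Prop}
    (hleft : ∀ i j k, P i j k → P j i k) (hright : ∀ i j k, P i j k → P i k j)
    (hself : ∀ i j, P i j j) (hlt : ∀ i j k, i < j → j < k → P i j k) (i j k : α) : P i j k := by
  have := lt_trichotomy i j
  have := lt_trichotomy j k
  have := lt_trichotomy i k
  grind

theorem commutatorElement_commutatorElement_mem_of_orderEmbedding (h : ∀ g : G, g ^ 3 = 1)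
    {x : α → G} {K : Subgroup G} (hK : ∀ τ : Fin 3 ↪o α, ⁅x (τ 0), ⁅x (τ 1), x (τ 2)⁆⁆ ∈ K)
    (i j k : α) : ⁅x i, ⁅x j, x k⁆⁆ ∈ K := by
  refine forall_three_of_swap_of_lt (P := fun i j k ↦ ⁅x i, ⁅x j, x k⁆⁆ ∈ K) ?_ ?_ ?_ ?_ i j k
  · intro i j k hmem
    rw [commutatorElement_swap_left_of_pow_three h]
    exact inv_mem hmem
  · intro i j k hmem
    rw [commutatorElement_swap_right_of_pow_three h]
    exact inv_mem hmem
  · simp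
  · intro i j k hij hjk
    exact hK (OrderEmbedding.ofStrictMono ![i, j, k]
      (by simpa [Fin.strictMono_iff_lt_succ, Fin.forall_fin_two] using ⟨hij, hjk⟩))

theorem card_dvd_of_pow_three [Finite α] (h : ∀ g : G, g ^ 3 = 1) {x : α → G}
    (hx : closure (Set.range x) = ⊤) :
    Nat.card G ∣ 3 ^ (Nat.card α + (Nat.card α).choose 2 + (Nat.card α).choose 3) := by
  have (k : ℕ) : Finite (Fin k ↪o α) := DFunLike.finite _
  let f₂ (σ : Fin 2 ↪o α) := ⁅x (σ 0), x (σ 1)⁆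
  let f₃ (τ : Fin 3 ↪o α) := ⁅x (τ 0), ⁅x (τ 1), x (τ 2)⁆⁆
  let N₃ := ⊥ ⊔ closure (Set.range f₃)
  let N₂ := N₃ ⊔ closure (Set.range f₂)
  have hf₃ τ : (f₃ τ : G ⧸ (⊥ : Subgroup G)) ∈ center (G ⧸ (⊥ : Subgroup G)) :=
    mk_mem_center_of_closure_eq_top hx fun g _ ↦
      commutatorElement_weight_four_eq_one_of_pow_three h g _ _ _
  have : N₃.Normal := normal_sup_closure_range hf₃
  have hN₃ : ∀ i j k, ⁅x i, ⁅x j, x k⁆⁆ ∈ N₃ :=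
    commutatorElement_commutatorElement_mem_of_orderEmbedding h fun τ ↦
      mem_sup_right (subset_closure (Set.mem_range_self τ))
  have hf₂ σ : (f₂ σ : G ⧸ N₃) ∈ center (G ⧸ N₃) :=
    mk_mem_center_of_closure_eq_top hx (Set.forall_mem_range.2 fun i ↦ hN₃ i _ _)
  have : N₂.Normal := normal_sup_closure_range hf₂
  have hN₂ : ∀ i j, ⁅x i, x j⁆ ∈ N₂ :=
    commutatorElement_mem_of_orderEmbedding fun σ ↦
      mem_sup_right (subset_closure (Set.mem_range_self σ))
  have hf₁ i : (x i : G ⧸ N₂) ∈ center (G ⧸ N₂) :=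
    mk_mem_center_of_closure_eq_top hx (Set.forall_mem_range.2 fun j ↦ hN₂ j i)
  have htop : N₂ ⊔ closure (Set.range x) = ⊤ := by rw [hx, sup_top_eq]
  calc Nat.card G
    _ = Nat.card ↥(N₂ ⊔ closure (Set.range x)) := by rw [htop, card_top]
    _ ∣ Nat.card N₂ * 3 ^ Nat.card α := card_sup_closure_range_dvd h hf₁
    _ ∣ Nat.card N₃ * 3 ^ Nat.card (Fin 2 ↪o α) * 3 ^ Nat.card α :=
      mul_dvd_mul_right (card_sup_closure_range_dvd h hf₂) _
    _ ∣ Nat.card (⊥ : Subgroup G) * 3 ^ Nat.card (Fin 3 ↪o α) * 3 ^ Nat.card (Fin 2 ↪o α) *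
        3 ^ Nat.card α :=
      mul_dvd_mul_right (mul_dvd_mul_right (card_sup_closure_range_dvd h hf₃) _) _
    _ = 3 ^ (Nat.card α + (Nat.card α).choose 2 + (Nat.card α).choose 3) := by
      rw [card_bot, card_fin_orderEmbedding, card_fin_orderEmbedding]
      ring

end UpperBound

/-- An explicit copy of the free group of exponent 3 on a finite type `α`. A 2- or 3-element subset
of `α` is encoded by the order embedding of `Fin 2` or `Fin 3` enumerating it, and `⟨a, b, c⟩`
stands for the product `∏ xᵢ^aᵢ ∏ ⁅xᵢ, xⱼ⁆^bᵢⱼ ∏ ⁅⁅xᵢ, xⱼ⁆, xₖ⁆^cᵢⱼₖ` over `i < j < k`, the first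
factor being taken in increasing order of the indices. -/
@[ext]
structure BurnsideModel (α : Type*) [LinearOrder α] where
  wt1 : α → ZMod 3
  wt2 : (Fin 2 ↪o α) → ZMod 3
  wt3 : (Fin 3 ↪o α) → ZMod 3

namespace BurnsideModel

variable {α : Type*} [LinearOrder α]

/-- The pair obtained from the triple `τ` by omitting its entry of index `i`. -/
def face (i : Fin 3) (τ : Fin 3 ↪o α) : Fin 2 ↪o α := (Fin.succAboveOrderEmb i).trans τ

/-- The wedge product `c ∧ w` of a 2-cochain and a 1-cochain on `α`. It gives the commutator of an
element without weight-one part and another element. -/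
def wedge (c : (Fin 2 ↪o α) → ZMod 3) (w : α → ZMod 3) (τ : Fin 3 ↪o α) : ZMod 3 :=
  c (face 2 τ) * w (τ 2) - c (face 1 τ) * w (τ 1) + c (face 0 τ) * w (τ 0)

instance : One (BurnsideModel α) := ⟨⟨0, 0, 0⟩⟩

/- The correction terms record the commutators created when the two normal forms are merged: moving
`xᵢ` of `b` to the left past `xⱼ` of `a`, for `i < j`, leaves `⁅xᵢ, xⱼ⁆⁻¹`. Moving generators past
the commutators of `a` gives the wedge product, and past the newly created ones the cubic terms. -/
instance : Mul (BurnsideModel α) where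
  mul a b :=
    { wt1 := fun i ↦ a.wt1 i + b.wt1 i
      wt2 := fun σ ↦ a.wt2 σ + b.wt2 σ - a.wt1 (σ 1) * b.wt1 (σ 0)
      wt3 := fun τ ↦ a.wt3 τ + b.wt3 τ + wedge a.wt2 b.wt1 τ +
        a.wt1 (τ 2) * b.wt1 (τ 0) * b.wt1 (τ 1) -
        a.wt1 (τ 1) * b.wt1 (τ 0) * (a.wt1 (τ 2) + b.wt1 (τ 2)) }

instance : Inv (BurnsideModel α) := ⟨fun a ↦ a * a⟩

theorem wt1_one (i : α) : (1 : BurnsideModel α).wt1 i = 0 := rfl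

theorem wt2_one (σ : Fin 2 ↪o α) : (1 : BurnsideModel α).wt2 σ = 0 := rfl

theorem wt3_one (τ : Fin 3 ↪o α) : (1 : BurnsideModel α).wt3 τ = 0 := rfl

theorem wt1_mul (a b : BurnsideModel α) (i : α) : (a * b).wt1 i = a.wt1 i + b.wt1 i := rfl

theorem wt2_mul (a b : BurnsideModel α) (σ : Fin 2 ↪o α) :
    (a * b).wt2 σ = a.wt2 σ + b.wt2 σ - a.wt1 (σ 1) * b.wt1 (σ 0) := rfl

theorem wt3_mul (a b : BurnsideModel α) (τ : Fin 3 ↪o α) :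
    (a * b).wt3 τ = a.wt3 τ + b.wt3 τ + wedge a.wt2 b.wt1 τ +
      a.wt1 (τ 2) * b.wt1 (τ 0) * b.wt1 (τ 1) -
      a.wt1 (τ 1) * b.wt1 (τ 0) * (a.wt1 (τ 2) + b.wt1 (τ 2)) := rfl

theorem wedge_wt1_mul (c : (Fin 2 ↪o α) → ZMod 3) (a b : BurnsideModel α) (τ : Fin 3 ↪o α) :
    wedge c (a * b).wt1 τ = wedge c a.wt1 τ + wedge c b.wt1 τ := by
  simp only [wedge, wt1_mul]
  ring

theorem wedge_wt2_mul (a b : BurnsideModel α) (w : α → ZMod 3) (τ : Fin 3 ↪o α) :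
    wedge (a * b).wt2 w τ = wedge a.wt2 w τ + wedge b.wt2 w τ -
      (a.wt1 (τ 1) * b.wt1 (τ 0) * w (τ 2) - a.wt1 (τ 2) * b.wt1 (τ 0) * w (τ 1) +
        a.wt1 (τ 2) * b.wt1 (τ 1) * w (τ 0)) := by
  have h₀ : (a * b).wt2 (face 0 τ) =
      a.wt2 (face 0 τ) + b.wt2 (face 0 τ) - a.wt1 (τ 2) * b.wt1 (τ 1) := rfl
  have h₁ : (a * b).wt2 (face 1 τ) =
      a.wt2 (face 1 τ) + b.wt2 (face 1 τ) - a.wt1 (τ 2) * b.wt1 (τ 0) := rfl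
  have h₂ : (a * b).wt2 (face 2 τ) =
      a.wt2 (face 2 τ) + b.wt2 (face 2 τ) - a.wt1 (τ 1) * b.wt1 (τ 0) := rfl
  simp only [wedge, h₀, h₁, h₂]
  ring

instance : Group (BurnsideModel α) :=
  Group.ofLeftAxioms
    (fun a b c ↦ by ext <;> grind [wt1_mul, wt2_mul, wt3_mul, wedge_wt1_mul, wedge_wt2_mul])
    (fun a ↦ by ext <;> simp [wt1_mul, wt2_mul, wt3_mul, wt1_one, wt2_one, wt3_one, wedge])
    (fun a ↦ by
      change a * a * a = 1
      ext <;> grind [wt1_mul, wt2_mul, wt3_mul, wt1_one, wt2_one, wt3_one, wedge_wt1_mul,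
        wedge_wt2_mul])

theorem pow_three_eq_one (a : BurnsideModel α) : a ^ 3 = 1 := by
  rw [pow_three']
  exact inv_mul_cancel a

theorem card_eq [Finite α] : Nat.card (BurnsideModel α) =
    3 ^ (Nat.card α + (Nat.card α).choose 2 + (Nat.card α).choose 3) := by
  have (k : ℕ) : Finite (Fin k ↪o α) := DFunLike.finite _
  let e : BurnsideModel α ≃
      (α → ZMod 3) × ((Fin 2 ↪o α) → ZMod 3) × ((Fin 3 ↪o α) → ZMod 3) :=
    { toFun a := (a.wt1, a.wt2, a.wt3)
      invFun p := ⟨p.1, p.2.1, p.2.2⟩ }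
  rw [Nat.card_congr e, Nat.card_prod, Nat.card_prod, Nat.card_fun, Nat.card_fun, Nat.card_fun,
    Nat.card_zmod, card_fin_orderEmbedding, card_fin_orderEmbedding, ← pow_add, ← pow_add,
    ← add_assoc]

theorem wt1_inv (a : BurnsideModel α) (i : α) : a⁻¹.wt1 i = -a.wt1 i := by
  rw [eq_neg_iff_add_eq_zero, ← wt1_mul, inv_mul_cancel, wt1_one]

theorem wt1_commutatorElement (a b : BurnsideModel α) (i : α) : ⁅a, b⁆.wt1 i = 0 := by
  simp only [commutatorElement_def, wt1_mul, wt1_inv]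
  ring

theorem wt2_commutatorElement (a b : BurnsideModel α) (σ : Fin 2 ↪o α) :
    ⁅a, b⁆.wt2 σ = a.wt1 (σ 0) * b.wt1 (σ 1) - a.wt1 (σ 1) * b.wt1 (σ 0) := by
  have h : ⁅a, b⁆ * (b * a) = a * b := by rw [commutatorElement_def]; group
  replace h := congr_arg (wt2 · σ) h
  simp only [wt2_mul, wt1_commutatorElement] at h
  linear_combination h

theorem commutatorElement_eq_wedge {a : BurnsideModel α} (ha : a.wt1 = 0) (b : BurnsideModel α) :
    ⁅a, b⁆ = ⟨0, 0, wedge a.wt2 b.wt1⟩ := by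
  rw [commutatorElement_def, mul_inv_eq_iff_eq_mul, mul_inv_eq_iff_eq_mul]
  ext
  · simp only [wt1_mul, ha, Pi.zero_apply]
    ring
  · simp only [wt1_mul, wt2_mul, ha, Pi.zero_apply]
    ring
  · simp only [wt1_mul, wt2_mul, wt3_mul, ha, wedge, Pi.zero_apply]
    ring

section Generation

open Subgroup

/-- The generators of the model. -/
def gen (i : α) : BurnsideModel α := ⟨Pi.single i 1, 0, 0⟩

theorem wt2_commutatorElement_gen (σ : Fin 2 ↪o α) :
    ⁅gen (σ 0), gen (σ 1)⁆.wt2 = Pi.single σ 1 := by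
  ext σ'
  have hσ : σ 0 < σ 1 := σ.strictMono zero_lt_one
  have hσ' : σ' 0 < σ' 1 := σ'.strictMono zero_lt_one
  have hext : σ' = σ ↔ σ' 0 = σ 0 ∧ σ' 1 = σ 1 := by
    rw [DFunLike.ext_iff, Fin.forall_fin_two]
  rw [wt2_commutatorElement]
  simp only [gen, Pi.single_apply, hext]
  grind

theorem wedge_single_single (τ : Fin 3 ↪o α) :
    wedge (Pi.single (face 2 τ) 1) (Pi.single (τ 2) 1) = Pi.single τ 1 := by
  ext τ'
  have h₀₁ : τ 0 < τ 1 := τ.strictMono (by decide)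
  have h₁₂ : τ 1 < τ 2 := τ.strictMono (by decide)
  have h₀₁' : τ' 0 < τ' 1 := τ'.strictMono (by decide)
  have h₁₂' : τ' 1 < τ' 2 := τ'.strictMono (by decide)
  have hext : τ' = τ ↔ τ' 0 = τ 0 ∧ τ' 1 = τ 1 ∧ τ' 2 = τ 2 := by
    rw [DFunLike.ext_iff, Fin.forall_fin_succ, Fin.forall_fin_two]
    rfl
  have hface i j : face i τ' = face j τ ↔
      τ' (i.succAbove 0) = τ (j.succAbove 0) ∧ τ' (i.succAbove 1) = τ (j.succAbove 1) := by
    rw [DFunLike.ext_iff, Fin.forall_fin_two]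
    rfl
  have h₀ : face 0 τ' = face 2 τ ↔ τ' 1 = τ 0 ∧ τ' 2 = τ 1 := hface 0 2
  have h₁ : face 1 τ' = face 2 τ ↔ τ' 0 = τ 0 ∧ τ' 2 = τ 1 := hface 1 2
  have h₂ : face 2 τ' = face 2 τ ↔ τ' 0 = τ 0 ∧ τ' 1 = τ 1 := hface 2 2
  -- The coincidences in `h₀` and `h₁` contribute nothing: their coefficient vanishes unless the
  -- omitted entry is `τ 2`, which contradicts the order.
  simp only [wedge, Pi.single_apply, hext, h₀, h₁, h₂]
  grind

theorem commutatorElement_commutatorElement_gen (τ : Fin 3 ↪o α) :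
    ⁅⁅gen (τ 0), gen (τ 1)⁆, gen (τ 2)⁆ = ⟨0, 0, Pi.single τ 1⟩ := by
  rw [commutatorElement_eq_wedge (funext (wt1_commutatorElement _ _)), ← wedge_single_single,
    ← wt2_commutatorElement_gen]
  rfl

theorem gen_mem_closure (i : α) : gen i ∈ closure (Set.range gen) :=
  subset_closure (Set.mem_range_self i)

variable [Finite α]

theorem mk_zero_zero_mem_closure (t : (Fin 3 ↪o α) → ZMod 3) :
    (⟨0, 0, t⟩ : BurnsideModel α) ∈ closure (Set.range gen) := by
  have : Finite (Fin 3 ↪o α) := DFunLike.finite _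
  refine mem_of_forall_single_mem (f := fun t ↦ (⟨0, 0, t⟩ : BurnsideModel α)) ?_ ?_ t
  · intro s t
    ext <;> simp [wt1_mul, wt2_mul, wt3_mul, wedge]
  · intro τ
    rw [← commutatorElement_commutatorElement_gen]
    exact commutatorElement_mem (commutatorElement_mem (gen_mem_closure _) (gen_mem_closure _))
      (gen_mem_closure _)

theorem mem_closure_of_wt_eq {a b : BurnsideModel α} (h₁ : a.wt1 = b.wt1) (h₂ : a.wt2 = b.wt2)
    (ha : a ∈ closure (Set.range gen)) : b ∈ closure (Set.range gen) := by
  have hb : b = a * ⟨0, 0, b.wt3 - a.wt3⟩ := by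
    ext <;> simp [wt1_mul, wt2_mul, wt3_mul, wedge, h₁, h₂]
  exact hb ▸ mul_mem ha (mk_zero_zero_mem_closure _)

theorem mem_closure_of_wt1_eq_zero {a : BurnsideModel α} (ha : a.wt1 = 0) :
    a ∈ closure (Set.range gen) := by
  have : Finite (Fin 2 ↪o α) := DFunLike.finite _
  suffices h : (⟨0, a.wt2, 0⟩ : BurnsideModel α) ∈ closure (Set.range gen) from
    mem_closure_of_wt_eq (a := ⟨0, a.wt2, 0⟩) ha.symm rfl h
  refine mem_of_forall_single_mem (f := fun c ↦ (⟨0, c, 0⟩ : BurnsideModel α)) ?_ ?_ a.wt2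
  · intro c d
    ext <;> simp [wt1_mul, wt2_mul, wt3_mul, wedge]
  · intro σ
    exact mem_closure_of_wt_eq (funext (wt1_commutatorElement _ _))
      (wt2_commutatorElement_gen σ)
      (commutatorElement_mem (gen_mem_closure _) (gen_mem_closure _))

theorem closure_range_gen : closure (Set.range (gen (α := α))) = ⊤ := by
  refine eq_top_iff.2 fun a _ ↦ ?_
  let φ : BurnsideModel α →* Multiplicative (α → ZMod 3) :=
    { toFun b := .ofAdd b.wt1
      map_one' := rfl
      map_mul' _ _ := rfl }
  obtain ⟨b, hb, hba⟩ : Multiplicative.ofAdd a.wt1 ∈ (closure (Set.range gen)).map φ :=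
    mem_of_forall_single_mem (fun _ _ ↦ rfl)
      (fun i ↦ mem_map_of_mem φ (gen_mem_closure i)) a.wt1
  have hwt1 : (b⁻¹ * a).wt1 = 0 := by
    ext i
    rw [wt1_mul, wt1_inv, ← Multiplicative.ofAdd.injective hba]
    exact neg_add_cancel _
  rw [← mul_inv_cancel_left b a]
  exact mul_mem hb (mem_closure_of_wt1_eq_zero hwt1)

end Generation

end BurnsideModel

/-- The free Burnside group of exponent `n` on `α`. -/
abbrev FreeBurnside (n : ℕ) (α : Type*) : Type _ :=
  FreeGroup α ⧸ Subgroup.normalClosure {w : FreeGroup α | ∃ v, w = v ^ n}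

namespace FreeBurnside

variable {n : ℕ} {α : Type*}

/-- The generators of the free Burnside group. -/
def of (i : α) : FreeBurnside n α := QuotientGroup.mk (FreeGroup.of i)

theorem pow_eq_one (q : FreeBurnside n α) : q ^ n = 1 := by
  obtain ⟨v, rfl⟩ := QuotientGroup.mk_surjective q
  exact (QuotientGroup.eq_one_iff _).2 (Subgroup.subset_normalClosure ⟨v, rfl⟩)

theorem closure_range_of : Subgroup.closure (Set.range (of : α → FreeBurnside n α)) = ⊤ := by
  have hrange : Set.range (of : α → FreeBurnside n α) =
      QuotientGroup.mk' _ '' Set.range FreeGroup.of := (Set.range_comp _ _)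
  rw [hrange, ← MonoidHom.map_closure, FreeGroup.closure_range_of,
    Subgroup.map_top_of_surjective _ (QuotientGroup.mk'_surjective _)]

theorem exists_surjective_of_pow_eq_one {G : Type*} [Group G] (hn : ∀ g : G, g ^ n = 1)
    {x : α → G} (hx : Subgroup.closure (Set.range x) = ⊤) :
    ∃ φ : FreeBurnside n α →* G, Function.Surjective φ := by
  have hker : Subgroup.normalClosure {w : FreeGroup α | ∃ v, w = v ^ n} ≤
      (FreeGroup.lift x).ker := by
    refine Subgroup.normalClosure_le_normal ?_
    rintro _ ⟨v, rfl⟩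
    exact MonoidHom.mem_ker.2 (by rw [map_pow, hn])
  have hsurj : Function.Surjective (FreeGroup.lift x) := by
    rw [← MonoidHom.range_eq_top, FreeGroup.range_lift_eq_closure, hx]
  exact ⟨QuotientGroup.lift _ _ hker, QuotientGroup.lift_surjective_of_surjective _ _ hsurj hker⟩

end FreeBurnside

theorem card_B43_general (α : Type*) [Finite α] :
    Finite (FreeBurnside 3 α) ∧ Nat.card (FreeBurnside 3 α) =
      3 ^ (Nat.card α + (Nat.card α).choose 2 + (Nat.card α).choose 3) := by
  obtain ⟨_, -⟩ := exists_wellFoundedLT α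
  have hdvd := card_dvd_of_pow_three (FreeBurnside.pow_eq_one (α := α))
    FreeBurnside.closure_range_of
  have hfin : Finite (FreeBurnside 3 α) :=
    Nat.finite_of_card_ne_zero (ne_zero_of_dvd_ne_zero (by positivity) hdvd)
  obtain ⟨φ, hφ⟩ := FreeBurnside.exists_surjective_of_pow_eq_one
    BurnsideModel.pow_three_eq_one (BurnsideModel.closure_range_gen (α := α))
  refine ⟨hfin, (Nat.le_of_dvd (by positivity) hdvd).antisymm ?_⟩
  rw [← BurnsideModel.card_eq]
  exact Nat.card_le_card_of_surjective φ hφ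

/-- `B(4,3)` is a finite group of cardinality exactly `3¹⁴`. -/
theorem card_B43 : Finite B43 ∧ Nat.card B43 = 3 ^ 14 := by
  simpa [Nat.choose] using card_B43_general (Fin 4)
end

section
/- Let G be any group in which g³ = 1 for every g ∈ G, and define t : G × G → G × G by t(a,b) = (a·b⁻¹·a, a). Then t∘t∘t is the identity map on G × G. (This is the algebraic content of the fact that Fox 3-colorings by G of a tangle are unchanged by a 3-move: applying the core-group crossing relation three times returns the original arc labels.) -/
/-- The core-group crossing move on pairs of labels: the pair `(a, b)` (overcrossing
label `a`, incoming undercrossing label `b`) is sent to `(a·b⁻¹·a, a)`. -/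
def coreMove (G : Type*) [Group G] : G × G → G × G :=
  fun p => (p.1 * p.2⁻¹ * p.1, p.1)

/-! Crossing multiplies both labels `(a, b)` on the left by `a * b⁻¹`, and it commutes with left
translation of both labels. Hence `n` crossings multiply both labels by `(a * b⁻¹) ^ n`. -/

section CoreMove

variable {G : Type*} [Group G]

theorem coreMove_eq_smul (p : G × G) : coreMove G p = (p.1 * p.2⁻¹) • p := by
  simp [coreMove, Prod.ext_iff]

theorem coreMove_smul (g : G) (p : G × G) : coreMove G (g • p) = g • coreMove G p := by
  simp [coreMove, mul_assoc]

theorem coreMove_iterate (n : ℕ) (p : G × G) :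
    (coreMove G)^[n] p = (p.1 * p.2⁻¹) ^ n • p := by
  induction n with
  | zero => rw [Function.iterate_zero_apply, pow_zero, one_smul]
  | succ n ih =>
    rw [Function.iterate_succ_apply', ih, coreMove_smul, coreMove_eq_smul, smul_smul, ← pow_succ]

theorem coreMove_iterate_eq_id_iff {n : ℕ} : (coreMove G)^[n] = id ↔ ∀ g : G, g ^ n = 1 := by
  constructor
  · intro hn g
    have hfix : g ^ n • (g, (1 : G)) = (g, 1) := by
      simpa only [coreMove_iterate, inv_one, mul_one, id] using congrFun hn (g, 1)
    simpa using congrArg Prod.snd hfix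
  · intro h
    funext p
    rw [coreMove_iterate, h, one_smul, id]

end CoreMove

/-- If `G` is a group in which `g³ = 1` for every `g`, then applying the
core-group crossing move three times is the identity on `G × G`: Fox 3-colorings
by `G` of a tangle are unchanged by a 3-move. -/
theorem coreMove_cube_eq_id (G : Type*) [Group G] (h : ∀ g : G, g ^ 3 = 1) :
    coreMove G ∘ coreMove G ∘ coreMove G = id :=
  coreMove_iterate_eq_id_iff.2 h
end

section
/- Every group G in which g³ = 1 for every g ∈ G satisfies the identity [[a,b],b] = 1 for all a, b ∈ G, where [a,b] = a b a⁻¹ b⁻¹. -/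
/-!
Write `c = a * b * a⁻¹` and `d = a⁻¹ * b * a`. Since `a⁻² = a`, the relation `(a * b) ^ 3 = 1` reads
`c * d * b = 1`, and replacing `a` by `a⁻¹` gives `d * c * b = 1`. Hence `c * d = b⁻¹ = d * c`, so
`c` commutes with `d`, therefore with `b = (c * d)⁻¹`, and so `⁅a, b⁆ = c * b⁻¹` commutes with `b`.
-/

open scoped commutatorElement

section

variable {G : Type*} [Group G] {a b c d : G}

theorem conj_mul_conj_inv_mul_self_eq_pow_three (ha : a ^ 3 = 1) (b : G) :
    a * b * a⁻¹ * (a⁻¹ * b * a) * b = (a * b) ^ 3 := by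
  have inv_mul_inv : a⁻¹ * a⁻¹ = a := by
    rw [← mul_inv_rev, inv_eq_iff_mul_eq_one, ← pow_three', ha]
  calc
    a * b * a⁻¹ * (a⁻¹ * b * a) * b = a * b * (a⁻¹ * a⁻¹) * b * a * b := by group
    _ = a * b * a * b * a * b := by rw [inv_mul_inv]
    _ = (a * b) ^ 3 := by simp only [pow_three', mul_assoc]

theorem commute_of_mul_mul_eq_one (hcd : c * d * b = 1) (hdc : d * c * b = 1) :
    Commute c b := by
  have comm : Commute c d := mul_right_cancel (hcd.trans hdc.symm)
  rw [← inv_eq_of_mul_eq_one_right hcd]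
  exact ((Commute.refl c).mul_right comm).inv_right

theorem commute_conj_self_of_pow_three_eq_one (ha : a ^ 3 = 1) (hab : (a * b) ^ 3 = 1)
    (hab' : (a⁻¹ * b) ^ 3 = 1) : Commute (a * b * a⁻¹) b := by
  have ha' : a⁻¹ ^ 3 = 1 := by rw [inv_pow, ha, inv_one]
  apply commute_of_mul_mul_eq_one (d := a⁻¹ * b * a)
  · rw [conj_mul_conj_inv_mul_self_eq_pow_three ha, hab]
  · simpa only [inv_inv, hab'] using conj_mul_conj_inv_mul_self_eq_pow_three ha' b

theorem exponent_three_commutator_general (ha : a ^ 3 = 1) (hab : (a * b) ^ 3 = 1)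
    (hab' : (a⁻¹ * b) ^ 3 = 1) : ⁅⁅a, b⁆, b⁆ = 1 := by
  rw [commutatorElement_eq_one_iff_commute, commutatorElement_def]
  exact (commute_conj_self_of_pow_three_eq_one ha hab hab').mul_left (Commute.refl b).inv_left

end

/-- In every group of exponent dividing 3 (`g³ = 1` for all `g`), the identity
`[[a,b],b] = 1` holds, where `⁅a, b⁆ = a * b * a⁻¹ * b⁻¹`. -/
theorem exponent_three_commutator (G : Type*) [Group G] (h : ∀ g : G, g ^ 3 = 1)
    (a b : G) : ⁅⁅a, b⁆, b⁆ = 1 :=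
  exponent_three_commutator_general (h a) (h (a * b)) (h (a⁻¹ * b))
end
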